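/- arXiv:2203.11738 — 3 statements merged into one kernel-verified Lean document; each statement's English description precedes it below -/
import Mathlib

section
/- Let M(λ, t) be the (n−1) × (n−1) Jacobian matrix of the polynomial map Φ, with rows indexed by the variables λ, t_{n−3}, …, t_0 and columns indexed by the components b_{n−2}, …, b_0 of Φ; explicitly, the row corresponding to λ has entries ∂b_{n−2}/∂λ = −2λ and ∂b_i/∂λ = −t_i for 0 ≤ i ≤ n−3, and the row corresponding to t_i has entry −λ in the column of b_i, entry 1 in the column of b_{i+1}, and 0 elsewhere. Then there is a sign ε ∈ {1, −1}, depending only on n, such that for all λ ∈ ℂ and t ∈ ℂ^{n−2}, det M(λ, t) = ε · Q(λ; λ, t) = ε · (2λ^{n−1} + Σ_{i=0}^{n−3} t_i λ^i). -/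
open Polynomial

/-- `P(w; b) = w^n + ∑_{i=0}^{n-2} b_i w^i`. -/
noncomputable def Pb (n : ℕ) (b : Fin (n - 1) → ℂ) : Polynomial ℂ :=
  X ^ n + ∑ i : Fin (n - 1), C (b i) * X ^ (i : ℕ)

/-- `Q(w; λ, t) = w^{n-1} + λ w^{n-2} + ∑_{i=0}^{n-3} t_i w^i`. -/
noncomputable def Qp (n : ℕ) (lam : ℂ) (t : Fin (n - 2) → ℂ) : Polynomial ℂ :=
  X ^ (n - 1) + C lam * X ^ (n - 2) + ∑ i : Fin (n - 2), C (t i) * X ^ (i : ℕ)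

/-- The extension of `t` by the conventions `t_{n-2} = λ` (and `0` beyond). -/
noncomputable def tExt (n : ℕ) (lam : ℂ) (t : Fin (n - 2) → ℂ) : ℕ → ℂ :=
  fun j => if h : j < n - 2 then t ⟨j, h⟩ else if j = n - 2 then lam else 0

/-- `Φ(λ, t)_i = t_{i-1} - λ t_i`, with the conventions `t_{-1} = 0`, `t_{n-2} = λ`. -/
noncomputable def Phi (n : ℕ) (lam : ℂ) (t : Fin (n - 2) → ℂ) : Fin (n - 1) → ℂ :=
  fun i => (if (i : ℕ) = 0 then 0 else tExt n lam t ((i : ℕ) - 1)) - lam * tExt n lam t (i : ℕ)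


/-- The Jacobian matrix of `Φ`: row `0` corresponds to the variable `λ`, and row `r`
(for `1 ≤ r ≤ n-2`) corresponds to the variable `t_{r-1}`; column `c` corresponds to the
component `b_c` of `Φ`.  The `λ`-row has entries `∂b_{n-2}/∂λ = -2λ` and `∂b_i/∂λ = -t_i`
for `0 ≤ i ≤ n-3`; the row of `t_i` has entry `-λ` in the column of `b_i`, entry `1` in
the column of `b_{i+1}`, and `0` elsewhere. -/
noncomputable def Jac (n : ℕ) (lam : ℂ) (t : Fin (n - 2) → ℂ) :
    Matrix (Fin (n - 1)) (Fin (n - 1)) ℂ :=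
  fun r c =>
    if (r : ℕ) = 0 then
      if h : (c : ℕ) < n - 2 then -(t ⟨(c : ℕ), h⟩) else -(2 * lam)
    else
      if (c : ℕ) = (r : ℕ) - 1 then -lam
      else if (c : ℕ) = (r : ℕ) then 1 else 0

def auxMat (lam : ℂ) (m : ℕ) (v : Fin (m + 1) → ℂ) : Matrix (Fin (m + 1)) (Fin (m + 1)) ℂ :=
  fun r c => if (r : ℕ) = 0 then v c
    else if (c : ℕ) = (r : ℕ) - 1 then -lam
      else if (c : ℕ) = (r : ℕ) then 1 else 0

lemma auxMat_det (lam : ℂ) (m : ℕ) : ∀ v : Fin (m + 1) → ℂ,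
    (auxMat lam m v).det = ∑ c, v c * lam ^ (c : ℕ) := by
  induction m with
  | zero => intro v; simp [auxMat]
  | succ m ih =>
    intro v
    rw [Matrix.det_succ_column_zero, Fin.sum_univ_succ, Fin.sum_univ_succ]
    have h0 : ((auxMat lam (m + 1) v).submatrix (Fin.succAbove 0) Fin.succ).det = 1 := by
      rw [Matrix.det_of_isLowerTriangular]
      · apply Finset.prod_eq_one
        intro i _
        simp [auxMat]
      · intro i j hij
        have hij' : (i : ℕ) < j := hij
        change (if (i : ℕ) + 1 = 0 then v j.succ
          else if (j : ℕ) + 1 = (i : ℕ) + 1 - 1 then -lam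
          else if (j : ℕ) + 1 = (i : ℕ) + 1 then 1 else 0) = 0
        rw [if_neg (by omega), if_neg (by omega), if_neg (by omega)]
    have h1 : (auxMat lam (m + 1) v).submatrix (Fin.succAbove (Fin.succ 0)) Fin.succ
        = auxMat lam m (fun c => v c.succ) := by
      ext i j
      refine Fin.cases ?_ (fun k => ?_) i
      · simp [auxMat]
      · simp only [auxMat, Matrix.submatrix_apply, Fin.succ_succAbove_succ,
          Fin.zero_succAbove, Fin.val_succ]
        split_ifs <;> first | rfl | omega
    have h2 : ∀ i : Fin m, auxMat lam (m + 1) v i.succ.succ 0 = 0 := by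
      intro i
      simp [auxMat]
    rw [h0, h1, ih]
    simp only [h2]
    rw [Fin.sum_univ_succ (n := m + 1)]
    simp [auxMat, Finset.mul_sum, pow_succ]
    apply Finset.sum_congr rfl
    intros; ring

theorem statement6 (n : ℕ) (hn : 2 ≤ n) :
    ∃ ε : ℂ, (ε = 1 ∨ ε = -1) ∧
      ∀ (lam : ℂ) (t : Fin (n - 2) → ℂ),
        (Jac n lam t).det = ε * (Qp n lam t).eval lam ∧
        (Jac n lam t).det =
          ε * (2 * lam ^ (n - 1) + ∑ i : Fin (n - 2), t i * lam ^ (i : ℕ)) := by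
  obtain ⟨m, rfl⟩ : ∃ m, n = m + 2 := ⟨n - 2, by omega⟩
  refine ⟨-1, Or.inr rfl, fun lam t => ?_⟩
  have key : (Jac (m + 2) lam t).det =
      -1 * (2 * lam ^ (m + 1) + ∑ i : Fin m, t i * lam ^ (i : ℕ)) := by
    have := auxMat_det lam m
      (fun c => if h : (c : ℕ) < m then -(t ⟨(c : ℕ), h⟩) else -(2 * lam))
    refine Eq.trans this ?_
    rw [Fin.sum_univ_castSucc]
    simp [pow_succ]
    ring
  have hQ : (Qp (m + 2) lam t).eval lam =
      2 * lam ^ (m + 1) + ∑ i : Fin (m + 2 - 2), t i * lam ^ (i : ℕ) := by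
    simp only [Qp, eval_add, eval_mul, eval_pow, eval_X, eval_C, eval_finsetSum]
    congr 1
    simp only [Nat.add_sub_cancel, show m + 2 - 1 = m + 1 from rfl]
    ring
  exact ⟨key.trans (congrArg (fun z => -1 * z) hQ.symm), key⟩
end

section
/- Let t ∈ ℂ with t ≠ 0 and let f_t = x_0³ + x_1³ + x_2³ + x_3³ + t·x_0x_1x_2x_3 ∈ ℂ[x_0, x_1, x_2, x_3]. Then the Tjurina algebra ℂ[x_0, x_1, x_2, x_3]/(f_t, ∂f_t/∂x_0, ∂f_t/∂x_1, ∂f_t/∂x_2, ∂f_t/∂x_3) is a finite-dimensional ℂ-vector space of dimension 15. (This computes dim H^0(X_t; T^1_{X_t}) = 15 for the weight-one deformation X_t of the O_{16} singularity.) -/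
open MvPolynomial

/-- The Tjurina ideal of `f ∈ ℂ[x₀,x₁,x₂,x₃]`: the ideal generated by `f` and its four
partial derivatives. -/
noncomputable def tjurinaIdeal (f : MvPolynomial (Fin 4) ℂ) : Ideal (MvPolynomial (Fin 4) ℂ) :=
  Ideal.span {f, pderiv 0 f, pderiv 1 f, pderiv 2 f, pderiv 3 f}

/-- The weight-one deformation `f_t = x₀³ + x₁³ + x₂³ + x₃³ + t·x₀x₁x₂x₃` of the Fermat
cubic cone. -/
noncomputable def fermatCubicDef (t : ℂ) : MvPolynomial (Fin 4) ℂ :=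
  X 0 ^ 3 + X 1 ^ 3 + X 2 ^ 3 + X 3 ^ 3 + C t * (X 0 * X 1 * X 2 * X 3)


/-- Exponent of the squarefree monomial attached to a subset of the variables. -/
noncomputable def sqfExp (S : Finset (Fin 4)) : Fin 4 →₀ ℕ :=
  Finsupp.equivFunOnFinite.symm (fun i => if i ∈ S then 1 else 0)

lemma sqfExp_apply (S : Finset (Fin 4)) (i : Fin 4) :
    sqfExp S i = if i ∈ S then 1 else 0 := rfl

lemma sqfExp_inj {S T : Finset (Fin 4)} (h : sqfExp S = sqfExp T) : S = T := by
  ext i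
  have := DFunLike.congr_fun h i
  simp only [sqfExp_apply] at this
  split_ifs at this <;> simp_all

lemma not_single_le_sqfExp (S : Finset (Fin 4)) (i : Fin 4) :
    ¬ Finsupp.single i 2 ≤ sqfExp S := by
  intro h
  have := h i
  simp only [sqfExp_apply, Finsupp.single_eq_same] at this
  split_ifs at this <;> omega

lemma sqfExp_ne_single (S : Finset (Fin 4)) (i : Fin 4) :
    sqfExp S ≠ Finsupp.single i 2 := fun h => not_single_le_sqfExp S i h.ge

lemma sqfExp_le {S T : Finset (Fin 4)} : sqfExp S ≤ sqfExp T ↔ S ⊆ T := by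
  constructor
  · intro h i hi
    have := h i
    simp only [sqfExp_apply, hi, if_true] at this
    by_contra hT
    simp [hT] at this
  · intro h i
    simp only [sqfExp_apply]
    by_cases hi : i ∈ S
    · simp [hi, h hi]
    · simp [hi]

lemma not_sqfExp_le_single {S : Finset (Fin 4)} {a b : Fin 4} (ha : a ∈ S) (hb : b ∈ S)
    (hab : a ≠ b) (j : Fin 4) : ¬ sqfExp S ≤ Finsupp.single j 2 := by
  intro h
  have h1 := h a
  have h2 := h b
  simp only [sqfExp_apply, ha, hb, if_true, Finsupp.single_apply] at h1 h2
  split_ifs at h1 h2 <;> first | omega | (subst_vars; exact hab rfl)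

lemma not_erase_le_single (i j : Fin 4) :
    ¬ sqfExp (Finset.univ.erase i) ≤ Finsupp.single j 2 := by
  apply not_sqfExp_le_single (a := i + 1) (b := i + 2) <;> fin_cases i <;> decide

lemma not_univ_le_single (j : Fin 4) :
    ¬ sqfExp Finset.univ ≤ Finsupp.single j 2 := by
  apply not_sqfExp_le_single (a := 0) (b := 1) <;> decide

/-- Index set of the monomial basis. -/
abbrev BIdx := {S : Finset (Fin 4) // S ≠ Finset.univ}

/-- The coordinate map. -/
noncomputable def coordMap (t : ℂ) : MvPolynomial (Fin 4) ℂ →ₗ[ℂ] (BIdx → ℂ) :=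
  LinearMap.pi fun S => MvPolynomial.lcoeff ℂ (sqfExp S.1) -
    (t / 3) • ∑ i : Fin 4, if S.1 = Finset.univ.erase i then
      MvPolynomial.lcoeff ℂ (Finsupp.single i 2) else 0

lemma coordMap_apply (t : ℂ) (p : MvPolynomial (Fin 4) ℂ) (S : BIdx) :
    coordMap t p S = coeff (sqfExp S.1) p -
      (t / 3) * ∑ i : Fin 4, if S.1 = Finset.univ.erase i then
        coeff (Finsupp.single i 2) p else 0 := by
  simp only [coordMap, LinearMap.pi_apply, LinearMap.sub_apply, LinearMap.smul_apply,
    LinearMap.sum_apply, smul_eq_mul, lcoeff_apply]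
  congr 2
  refine Finset.sum_congr rfl fun i _ => ?_
  split_ifs <;> simp

lemma eq_erase_of_subset {S : Finset (Fin 4)} (hS : S ≠ Finset.univ) {i : Fin 4}
    (h : Finset.univ.erase i ⊆ S) : S = Finset.univ.erase i := by
  revert S i; decide

lemma erase_inj' {i j : Fin 4} : (Finset.univ.erase i = Finset.univ.erase j) ↔ i = j := by
  revert i j; decide

/-- The partial derivatives, as sums of monomials. -/
noncomputable def gen (t : ℂ) (i : Fin 4) : MvPolynomial (Fin 4) ℂ :=
  monomial (Finsupp.single i 2) 3 + monomial (sqfExp (Finset.univ.erase i)) t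

lemma coordMap_gen (t : ℂ) (p : MvPolynomial (Fin 4) ℂ) (i : Fin 4) :
    coordMap t (p * gen t i) = 0 := by
  funext S
  rw [coordMap_apply]
  simp only [gen, mul_add, coeff_add, coeff_mul_monomial', not_single_le_sqfExp, sqfExp_le,
    not_erase_le_single, if_false, zero_add, add_zero, Pi.zero_apply]
  by_cases h : Finset.univ.erase i ⊆ S.1
  · have hS := eq_erase_of_subset S.2 h
    simp only [hS, subset_refl, if_true, tsub_self, erase_inj', Finset.sum_ite_eq,
      Finset.mem_univ, le_refl]
    ring
  · simp only [h, if_false]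
    rw [Finset.sum_eq_zero]
    · simp
    · intro j _
      split_ifs with h1 h2
      · exfalso
        have : i = j := by
          by_contra hij
          have := h2 i
          simp [Finsupp.single_apply, Ne.symm hij] at this
        subst this
        exact h h1.ge
      · rfl
      · rfl

lemma coordMap_prod (t c : ℂ) (p : MvPolynomial (Fin 4) ℂ) :
    coordMap t (p * monomial (sqfExp Finset.univ) c) = 0 := by
  funext S
  rw [coordMap_apply]
  have : ¬ Finset.univ ⊆ S.1 := fun h => S.2 (Finset.univ_subset_iff.mp h)
  simp [coeff_mul_monomial', sqfExp_le, not_univ_le_single, this]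

lemma monomial_sqfExp (S : Finset (Fin 4)) (c : ℂ) :
    monomial (sqfExp S) c = C c * ∏ i ∈ S, X i := by
  rw [monomial_eq, Finsupp.prod_fintype _ _ (by simp)]
  simp [sqfExp_apply, pow_ite, Finset.prod_ite_mem]

lemma gen_eq (t : ℂ) (i : Fin 4) :
    gen t i = C 3 * X i ^ 2 + C t * ∏ j ∈ Finset.univ.erase i, X j := by
  rw [gen, monomial_sqfExp, monomial_eq]
  simp

lemma gen_eq_pderiv (t : ℂ) (i : Fin 4) : pderiv i (fermatCubicDef t) = gen t i := by
  have h0 : (Finset.univ.erase 0 : Finset (Fin 4)) = {1, 2, 3} := by decide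
  have h1 : (Finset.univ.erase 1 : Finset (Fin 4)) = {0, 2, 3} := by decide
  have h2 : (Finset.univ.erase 2 : Finset (Fin 4)) = {0, 1, 3} := by decide
  have h3 : (Finset.univ.erase 3 : Finset (Fin 4)) = {0, 1, 2} := by decide
  have c3 : (C 3 : MvPolynomial (Fin 4) ℂ) = 3 := map_ofNat C 3
  rw [gen_eq, c3]
  fin_cases i <;>
  simp [fermatCubicDef, Derivation.leibniz, Derivation.leibniz_pow, pderiv_X,
    Pi.single_apply, h0, h1, h2, h3] <;> (left; ring)

lemma gen_mem (t : ℂ) (i : Fin 4) : gen t i ∈ tjurinaIdeal (fermatCubicDef t) := by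
  rw [← gen_eq_pderiv]
  apply Ideal.subset_span
  fin_cases i <;> simp

lemma f_eq (t : ℂ) : fermatCubicDef t =
    C (1 / 3) * ∑ i, X i * gen t i + monomial (sqfExp Finset.univ) (- (t / 3)) := by
  have h0 : (Finset.univ.erase 0 : Finset (Fin 4)) = {1, 2, 3} := by decide
  have h1 : (Finset.univ.erase 1 : Finset (Fin 4)) = {0, 2, 3} := by decide
  have h2 : (Finset.univ.erase 2 : Finset (Fin 4)) = {0, 1, 3} := by decide
  have h3 : (Finset.univ.erase 3 : Finset (Fin 4)) = {0, 1, 2} := by decide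
  have c3 : (C (1/3) : MvPolynomial (Fin 4) ℂ) * C 3 = 1 := by rw [← C_mul]; norm_num
  have c4 : (C (-(t/3)) : MvPolynomial (Fin 4) ℂ) = - (C (1/3) * C t) := by
    rw [← C_mul, ← C_neg]; congr 1; ring
  simp only [gen_eq, monomial_sqfExp, Fin.sum_univ_four, Fin.prod_univ_four, h0, h1, h2, h3, c4,
    fermatCubicDef]
  simp
  simp only [one_div] at c3
  have c5 : (C 3 : MvPolynomial (Fin 4) ℂ) = 3 := map_ofNat C 3
  rw [c5] at c3 ⊢
  linear_combination (-(X 0 ^ 3 + X 1 ^ 3 + X 2 ^ 3 + X 3 ^ 3 + C t * (X 0 * X 1 * X 2 * X 3))) * c3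

lemma univ_mem (t : ℂ) (ht : t ≠ 0) :
    monomial (sqfExp Finset.univ) 1 ∈ tjurinaIdeal (fermatCubicDef t) := by
  have hf : fermatCubicDef t ∈ tjurinaIdeal (fermatCubicDef t) :=
    Ideal.subset_span (by simp)
  have h : monomial (sqfExp Finset.univ) (-(t/3)) ∈ tjurinaIdeal (fermatCubicDef t) := by
    rw [← (sub_eq_iff_eq_add'.mpr (f_eq t))]
    exact Ideal.sub_mem _ hf (Ideal.mul_mem_left _ _ (Ideal.sum_mem _ fun i _ =>
      Ideal.mul_mem_left _ _ (gen_mem t i)))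
  have := Ideal.mul_mem_left _ (C (-(t/3))⁻¹) h
  rwa [C_mul_monomial, inv_mul_cancel₀] at this
  simpa using ht

lemma ideal_le (t : ℂ) (q : MvPolynomial (Fin 4) ℂ)
    (hq : q ∈ tjurinaIdeal (fermatCubicDef t)) : coordMap t q = 0 := by
  have hf : ∀ p, coordMap t (p * fermatCubicDef t) = 0 := by
    intro p
    rw [f_eq, mul_add, map_add, coordMap_prod, add_zero, Finset.mul_sum, Finset.mul_sum, map_sum]
    refine Finset.sum_eq_zero fun i _ => ?_
    rw [← mul_assoc, ← mul_assoc]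
    exact coordMap_gen _ _ _
  refine Submodule.span_induction (p := fun q _ => ∀ p, coordMap t (p * q) = 0)
    ?_ ?_ ?_ ?_ hq 1 |> fun h => by simpa using h
  · intro x hx p
    simp only [gen_eq_pderiv, Set.mem_insert_iff, Set.mem_singleton_iff] at hx
    rcases hx with rfl | rfl | rfl | rfl | rfl
    · exact hf p
    all_goals exact coordMap_gen _ _ _
  · simp
  · intro x y _ _ hx hy p
    rw [mul_add, map_add, hx, hy, add_zero]
  · intro a x _ hx p
    rw [smul_eq_mul, ← mul_assoc]
    exact hx _

lemma coordMap_sqf (t : ℂ) (S : BIdx) :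
    coordMap t (monomial (sqfExp S.1) 1) = Pi.single S 1 := by
  funext T
  rw [coordMap_apply]
  simp only [coeff_monomial, sqfExp_ne_single, if_false, ite_self, Finset.sum_const_zero,
    mul_zero, sub_zero, Pi.single_apply]
  by_cases h : T = S
  · simp [h]
  · have : sqfExp S.1 ≠ sqfExp T.1 := fun e => h (Subtype.ext (sqfExp_inj e).symm)
    simp [h, this]

lemma monomial_mem_of_le {I : Ideal (MvPolynomial (Fin 4) ℂ)} {m n : Fin 4 →₀ ℕ}
    (h : m ≤ n) (hm : monomial m (1 : ℂ) ∈ I) : monomial n (1 : ℂ) ∈ I := by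
  have := Ideal.mul_mem_left I (monomial (n - m) 1) hm
  rwa [monomial_mul, tsub_add_cancel_of_le h, one_mul] at this

/-- Reduction of a square modulo the ideal. -/
lemma mk_sq (t : ℂ) (m : Fin 4 →₀ ℕ) (i : Fin 4)
    (h : monomial (m + sqfExp (Finset.univ.erase i)) (1 : ℂ) ∈ tjurinaIdeal (fermatCubicDef t)) :
    monomial (m + Finsupp.single i 2) (1 : ℂ) ∈ tjurinaIdeal (fermatCubicDef t) := by
  have h1 := Ideal.mul_mem_left _ (monomial m (1/3)) (gen_mem t i)
  have h2 := Ideal.mul_mem_left _ (C (t/3)) h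
  have := Ideal.sub_mem _ h1 h2
  rw [gen, mul_add, monomial_mul, monomial_mul, C_mul_monomial] at this
  convert this using 1
  rw [show 1 / 3 * t = t / 3 * 1 by ring, add_sub_cancel_right]
  norm_num

lemma cube_mem (t : ℂ) (ht : t ≠ 0) (i : Fin 4) :
    monomial (Finsupp.single i 3) (1 : ℂ) ∈ tjurinaIdeal (fermatCubicDef t) := by
  have := mk_sq t (Finsupp.single i 1) i (monomial_mem_of_le (m := sqfExp Finset.univ) ?_
    (univ_mem t ht))
  · rwa [← Finsupp.single_add] at this
  · intro j
    by_cases h : i = j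
    · simp [sqfExp_apply, Finsupp.single_apply, h]
    · simp [sqfExp_apply, Ne.symm h]

lemma sq_mul_mem (t : ℂ) (ht : t ≠ 0) (i j : Fin 4) (hij : i ≠ j) :
    monomial (Finsupp.single j 1 + Finsupp.single i 2) (1 : ℂ) ∈
      tjurinaIdeal (fermatCubicDef t) := by
  obtain ⟨k, hki, hkj⟩ : ∃ k, k ≠ i ∧ k ≠ j := by revert i j; decide
  obtain ⟨l, hli, hlj, hlk⟩ : ∃ l, l ≠ i ∧ l ≠ j ∧ l ≠ k := by revert i j k; decide
  have hall : ∀ a : Fin 4, a = i ∨ a = j ∨ a = k ∨ a = l := by revert i j k l; decide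
  apply mk_sq
  -- x_j^2 x_k x_l
  have e1 : Finsupp.single j 1 + sqfExp (Finset.univ.erase i) =
      (Finsupp.single k 1 + Finsupp.single l 1) + Finsupp.single j 2 := by
    ext a
    rcases hall a with rfl | rfl | rfl | rfl <;>
      simp [sqfExp_apply, Finsupp.single_apply, *, Ne.symm, hij.symm, hki.symm, hkj.symm,
        hli.symm, hlj.symm, hlk.symm]
  rw [e1]
  apply mk_sq
  -- x_k^2 x_l^2 x_i
  have e2 : (Finsupp.single k 1 + Finsupp.single l 1) + sqfExp (Finset.univ.erase j) =
      (Finsupp.single i 1 + Finsupp.single l 2) + Finsupp.single k 2 := by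
    ext a
    rcases hall a with rfl | rfl | rfl | rfl <;>
      simp [sqfExp_apply, Finsupp.single_apply, *, Ne.symm, hij.symm, hki.symm, hkj.symm,
        hli.symm, hlj.symm, hlk.symm]
  rw [e2]
  apply mk_sq
  refine monomial_mem_of_le ?_ (cube_mem t ht l)
  intro a
  rcases hall a with rfl | rfl | rfl | rfl <;>
      simp [sqfExp_apply, Finsupp.single_apply, *, Ne.symm, hij.symm, hki.symm, hkj.symm,
        hli.symm, hlj.symm, hlk.symm]

lemma reduce_monomial (t : ℂ) (ht : t ≠ 0) (m : Fin 4 →₀ ℕ) :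
    monomial m (1 : ℂ) - ∑ S : BIdx, coordMap t (monomial m 1) S • monomial (sqfExp S.1) (1 : ℂ)
      ∈ tjurinaIdeal (fermatCubicDef t) := by
  have hzero : monomial m (1 : ℂ) ∈ tjurinaIdeal (fermatCubicDef t) →
      monomial m (1 : ℂ) - ∑ S : BIdx,
        coordMap t (monomial m 1) S • monomial (sqfExp S.1) (1 : ℂ)
      ∈ tjurinaIdeal (fermatCubicDef t) := by
    intro h
    simpa [ideal_le t _ h] using h
  by_cases hsq : ∃ i, 2 ≤ m i
  · obtain ⟨i, hi⟩ := hsq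
    by_cases h3 : 3 ≤ m i
    · exact hzero (monomial_mem_of_le (by simpa using h3) (cube_mem t ht i))
    by_cases hj : ∃ j, i ≠ j ∧ 1 ≤ m j
    · obtain ⟨j, hij, hj⟩ := hj
      refine hzero (monomial_mem_of_le ?_ (sq_mul_mem t ht i j hij))
      intro a
      by_cases h1 : i = a
      · subst h1; simpa [Finsupp.single_apply, hij.symm] using hi
      · by_cases h2 : j = a
        · subst h2; simpa [Finsupp.single_apply, hij] using hj
        · simp [Finsupp.single_apply, h1, h2]
    push Not at hj
    have hm : m = Finsupp.single i 2 := by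
      ext a
      by_cases h1 : i = a
      · subst h1; simp; omega
      · have := hj a h1
        simp [Finsupp.single_apply, h1]; omega
    subst hm
    have hg := Ideal.mul_mem_left _ (C (1/3)) (gen_mem t i)
    have hgen : C (1/3) * gen t i = monomial (Finsupp.single i 2) 1 +
        (t / 3) • monomial (sqfExp (Finset.univ.erase i)) 1 := by
      rw [gen, mul_add, C_mul_monomial, C_mul_monomial, smul_monomial]
      congr 2
      · norm_num
      · simp; ring
    let S0 : BIdx := ⟨Finset.univ.erase i, by simp⟩
    have hc : coordMap t (monomial (Finsupp.single i 2) 1) = -(t/3) • Pi.single S0 1 := by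
      have h0 := ideal_le t _ hg
      rw [hgen, map_add, map_smul] at h0
      have := coordMap_sqf t S0
      simp only [S0] at this
      rw [this] at h0
      rw [neg_smul]
      exact eq_neg_of_add_eq_zero_left h0
    rw [hc]
    rw [hgen] at hg
    convert hg using 1
    rw [Finset.sum_eq_single S0]
    · simp [S0]
    · intro b _ hb
      simp [hb]
    · simp
  · push Not at hsq
    have hm : m = sqfExp (Finset.univ.filter fun i => m i = 1) := by
      ext a
      have := hsq a
      simp only [sqfExp_apply, Finset.mem_filter, Finset.mem_univ, true_and]
      split_ifs <;> omega
    generalize Finset.univ.filter (fun i => m i = 1) = S at hm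
    subst hm
    by_cases hS : S = Finset.univ
    · subst hS
      exact hzero (univ_mem t ht)
    · have := coordMap_sqf t ⟨S, hS⟩
      simp only at this
      rw [this, Finset.sum_eq_single ⟨S, hS⟩]
      · simp
      · intro b _ hb
        simp [hb]
      · simp

lemma reduce (t : ℂ) (ht : t ≠ 0) (p : MvPolynomial (Fin 4) ℂ) :
    p - ∑ S : BIdx, coordMap t p S • monomial (sqfExp S.1) (1 : ℂ)
      ∈ tjurinaIdeal (fermatCubicDef t) := by
  induction p using MvPolynomial.induction_on' with
  | monomial m c =>
    have := Ideal.mul_mem_left _ (C c) (reduce_monomial t ht m)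
    have e : monomial m c = c • monomial m (1 : ℂ) := by simp [smul_monomial]
    rw [e, map_smul]
    rw [← smul_eq_C_mul, smul_sub, Finset.smul_sum] at this
    simpa [smul_smul] using this
  | add p q hp hq =>
    convert Ideal.add_mem _ hp hq using 1
    simp only [map_add, Pi.add_apply, add_smul, Finset.sum_add_distrib]
    ring

lemma ker_coordMap (t : ℂ) (ht : t ≠ 0) :
    LinearMap.ker (coordMap t) = (tjurinaIdeal (fermatCubicDef t)).restrictScalars ℂ := by
  ext p
  simp only [LinearMap.mem_ker, Submodule.restrictScalars_mem]
  constructor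
  · intro h
    simpa [h] using reduce t ht p
  · exact ideal_le t p

lemma coordMap_surj (t : ℂ) : Function.Surjective (coordMap t) := by
  intro v
  refine ⟨∑ S : BIdx, v S • monomial (sqfExp S.1) 1, ?_⟩
  simp only [map_sum, map_smul, coordMap_sqf]
  funext T
  simp [Finset.sum_apply, Pi.single_apply]

/-- The Tjurina algebra in coordinates. -/
noncomputable def tjurinaEquiv (t : ℂ) (ht : t ≠ 0) :
    (MvPolynomial (Fin 4) ℂ ⧸ tjurinaIdeal (fermatCubicDef t)) ≃ₗ[ℂ] (BIdx → ℂ) :=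
  (Submodule.Quotient.restrictScalarsEquiv ℂ (tjurinaIdeal (fermatCubicDef t))).symm ≪≫ₗ
    Submodule.quotEquivOfEq _ _ (ker_coordMap t ht).symm ≪≫ₗ
    (coordMap t).quotKerEquivOfSurjective (coordMap_surj t)

theorem statement8 (t : ℂ) (ht : t ≠ 0) :
    FiniteDimensional ℂ (MvPolynomial (Fin 4) ℂ ⧸ tjurinaIdeal (fermatCubicDef t)) ∧
    Module.finrank ℂ (MvPolynomial (Fin 4) ℂ ⧸ tjurinaIdeal (fermatCubicDef t)) = 15 := by
  refine ⟨Module.Finite.equiv (tjurinaEquiv t ht).symm, ?_⟩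
  rw [(tjurinaEquiv t ht).finrank_eq, Module.finrank_fintype_fun_eq_card]
  decide
end

section
/- Let t ∈ ℂ with t ≠ 0 and let f_t = x_0² + x_1² + x_2⁵ − x_3⁵ + t·x_2³x_3³ ∈ ℂ[x_0, x_1, x_2, x_3] (the weight-one deformation of the compound A_4 singularity x² + y² + z⁵ − w⁵). Then the Tjurina algebra ℂ[x_0, x_1, x_2, x_3]/(f_t, ∂f_t/∂x_0, ∂f_t/∂x_1, ∂f_t/∂x_2, ∂f_t/∂x_3) is a finite-dimensional ℂ-vector space of dimension 15. -/
open MvPolynomial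

/-- The weight-one deformation `f_t = x₀² + x₁² + x₂⁵ − x₃⁵ + t·x₂³x₃³` of the compound
`A₄` singularity. -/
noncomputable def cA4Def (t : ℂ) : MvPolynomial (Fin 4) ℂ :=
  X 0 ^ 2 + X 1 ^ 2 + X 2 ^ 5 - X 3 ^ 5 + C t * (X 2 ^ 3 * X 3 ^ 3)

namespace CA4

/-- Index set of the monomial basis. -/
abbrev K := {p : Fin 4 × Fin 4 // p ≠ (3, 3)}

/-- Monomials. -/
noncomputable def M (a b i j : ℕ) : MvPolynomial (Fin 4) ℂ :=
  X 0 ^ a * X 1 ^ b * X 2 ^ i * X 3 ^ j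

/-- Normal form of a monomial. -/
noncomputable def nu (c : ℂ) (a b i j : ℕ) : K → ℂ := fun k =>
  if a = 0 ∧ b = 0 then
    (if i = (k.1.1 : ℕ) ∧ j = (k.1.2 : ℕ) then 1
     else if i = 4 ∧ j = 0 ∧ (k.1.1 : ℕ) = 2 ∧ (k.1.2 : ℕ) = 3 then -c
     else if i = 0 ∧ j = 4 ∧ (k.1.1 : ℕ) = 3 ∧ (k.1.2 : ℕ) = 2 then c else 0)
  else 0

/-- Normal form map. -/
noncomputable def phi (c : ℂ) : MvPolynomial (Fin 4) ℂ →ₗ[ℂ] (K → ℂ) :=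
  (basisMonomials (Fin 4) ℂ).constr ℂ (fun s => nu c (s 0) (s 1) (s 2) (s 3))

/-- Section of the normal form map. -/
noncomputable def sig : (K → ℂ) →ₗ[ℂ] MvPolynomial (Fin 4) ℂ :=
  Fintype.linearCombination ℂ (fun k : K => M 0 0 k.1.1 k.1.2)

lemma monomial_eq_M (s : Fin 4 →₀ ℕ) : monomial s (1 : ℂ) = M (s 0) (s 1) (s 2) (s 3) := by
  rw [MvPolynomial.monomial_eq, Finsupp.prod_fintype _ _ (by simp)]
  simp [M, Fin.prod_univ_four]

lemma phi_M (c : ℂ) (a b i j : ℕ) : phi c (M a b i j) = nu c a b i j := by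
  have h := monomial_eq_M (Finsupp.equivFunOnFinite.symm ![a, b, i, j])
  simp only [Finsupp.equivFunOnFinite_symm_apply_apply] at h
  have h2 : M a b i j = monomial (Finsupp.equivFunOnFinite.symm ![a, b, i, j]) (1 : ℂ) := by
    rw [h]; rfl
  have h3 := (basisMonomials (Fin 4) ℂ).constr_basis ℂ
    (fun s => nu c (s 0) (s 1) (s 2) (s 3)) (Finsupp.equivFunOnFinite.symm ![a, b, i, j])
  rw [coe_basisMonomials] at h3
  rw [h2]
  exact h3

lemma mem_of_M (S : Submodule ℂ (MvPolynomial (Fin 4) ℂ)) (h : ∀ a b i j, M a b i j ∈ S)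
    (p : MvPolynomial (Fin 4) ℂ) : p ∈ S := by
  induction p using MvPolynomial.induction_on' with
  | monomial u a =>
    have : monomial u a = a • monomial u (1 : ℂ) := by simp [smul_monomial]
    rw [this, monomial_eq_M]
    exact S.smul_mem _ (h _ _ _ _)
  | add p q hp hq => exact S.add_mem hp hq

lemma phi_mul_zero (c : ℂ) (g : MvPolynomial (Fin 4) ℂ)
    (h : ∀ a b i j, phi c (M a b i j * g) = 0) (p : MvPolynomial (Fin 4) ℂ) :
    phi c (p * g) = 0 := by
  have := mem_of_M (LinearMap.ker ((phi c).comp (LinearMap.mulRight ℂ g)))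
    (by intro a b i j; simpa using h a b i j) p
  simpa using this

lemma nu_zero (c : ℂ) (a b i j : ℕ) (h : 0 < a ∨ 0 < b ∨ 5 ≤ i ∨ 5 ≤ j ∨ (4 ≤ i ∧ 1 ≤ j) ∨
    (1 ≤ i ∧ 4 ≤ j) ∨ (3 ≤ i ∧ 3 ≤ j)) : nu c a b i j = 0 := by
  ext ⟨⟨k, l⟩, hk⟩
  have hk' : ¬ ((k : ℕ) = 3 ∧ (l : ℕ) = 3) := by
    rintro ⟨h1, h2⟩; exact hk (Prod.ext (Fin.ext h1) (Fin.ext h2))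
  have := k.2
  have := l.2
  simp only [nu, Pi.zero_apply]
  split_ifs <;> first | rfl | omega

lemma nu_single (c : ℂ) (k : K) : nu c 0 0 k.1.1 k.1.2 = Pi.single k 1 := by
  ext l
  obtain ⟨⟨k1, k2⟩, hk⟩ := k
  obtain ⟨⟨l1, l2⟩, hl⟩ := l
  have := k1.2
  have := k2.2
  simp only [nu, Pi.single_apply, Subtype.mk.injEq, Prod.mk.injEq, Fin.ext_iff]
  grind

lemma nu_40 (c : ℂ) : nu c 0 0 4 0 = -c • nu c 0 0 2 3 := by
  ext ⟨⟨k, l⟩, hk⟩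
  fin_cases k <;> fin_cases l <;> simp [nu]

lemma nu_04 (c : ℂ) : nu c 0 0 0 4 = c • nu c 0 0 3 2 := by
  ext ⟨⟨k, l⟩, hk⟩
  fin_cases k <;> fin_cases l <;> simp [nu]

lemma sig_single (k : K) : sig (Pi.single k 1) = M 0 0 k.1.1 k.1.2 := by
  simp [sig, Fintype.linearCombination_apply_single]

lemma phi_sig (c : ℂ) (v : K → ℂ) : phi c (sig v) = v := by
  have : (phi c).comp sig = LinearMap.id := by
    apply LinearMap.pi_ext'
    intro k
    ext1
    simp only [LinearMap.comp_apply, LinearMap.single_apply, LinearMap.id_apply]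
    rw [sig_single, phi_M, nu_single]
  exact LinearMap.congr_fun this v

lemma pd0 (t : ℂ) : pderiv 0 (cA4Def t) = 2 * X 0 := by
  simp [cA4Def, pderiv_X]

lemma pd1 (t : ℂ) : pderiv 1 (cA4Def t) = 2 * X 1 := by
  simp [cA4Def, pderiv_X]

lemma pd2 (t : ℂ) : pderiv 2 (cA4Def t) = 5 * X 2 ^ 4 + 3 * C t * X 2 ^ 2 * X 3 ^ 3 := by
  simp [cA4Def, pderiv_X]; ring

lemma pd3 (t : ℂ) : pderiv 3 (cA4Def t) = -5 * X 3 ^ 4 + 3 * C t * X 2 ^ 3 * X 3 ^ 2 := by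
  simp [cA4Def, pderiv_X]; ring

lemma phi_ideal (t : ℂ) (p : MvPolynomial (Fin 4) ℂ) (hp : p ∈ tjurinaIdeal (cA4Def t)) :
    ∀ q, phi (3 * t / 5) (q * p) = 0 := by
  rw [tjurinaIdeal] at hp
  induction hp using Submodule.span_induction with
  | zero => simp
  | add x y _ _ hx hy => intro q; rw [mul_add, map_add, hx, hy, add_zero]
  | smul a x hx0 hx => intro q; rw [smul_eq_mul, ← mul_assoc]; exact hx _
  | mem x hx =>
    apply phi_mul_zero
    intro a b i j
    rw [pd0, pd1, pd2, pd3] at hx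
    simp only [Set.mem_insert_iff, Set.mem_singleton_iff] at hx
    rcases hx with rfl | rfl | rfl | rfl | rfl
    · have : M a b i j * cA4Def t = M (a + 2) b i j + M a (b + 2) i j + M a b (i + 5) j
          - M a b i (j + 5) + t • M a b (i + 3) (j + 3) := by
        simp only [M, cA4Def, smul_eq_C_mul]; ring
      rw [this]
      simp only [map_add, map_sub, map_smul, phi_M]
      rw [nu_zero _ (a + 2) b i j (by omega), nu_zero _ a (b + 2) i j (by omega),
        nu_zero _ a b (i + 5) j (by omega), nu_zero _ a b i (j + 5) (by omega),
        nu_zero _ a b (i + 3) (j + 3) (by omega)]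
      simp
    · have : M a b i j * (2 * X 0) = (2 : ℂ) • M (a + 1) b i j := by
        simp only [M, smul_eq_C_mul, map_ofNat]; ring
      rw [this, map_smul, phi_M, nu_zero _ (a + 1) b i j (by omega), smul_zero]
    · have : M a b i j * (2 * X 1) = (2 : ℂ) • M a (b + 1) i j := by
        simp only [M, smul_eq_C_mul, map_ofNat]; ring
      rw [this, map_smul, phi_M, nu_zero _ a (b + 1) i j (by omega), smul_zero]
    · have : M a b i j * (5 * X 2 ^ 4 + 3 * C t * X 2 ^ 2 * X 3 ^ 3)
          = (5 : ℂ) • M a b (i + 4) j + (3 * t) • M a b (i + 2) (j + 3) := by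
        simp only [M, smul_eq_C_mul, map_ofNat, map_mul]; ring
      rw [this]
      simp only [map_add, map_smul, phi_M]
      by_cases h : a = 0 ∧ b = 0 ∧ i = 0 ∧ j = 0
      · obtain ⟨rfl, rfl, rfl, rfl⟩ := h
        simp only [zero_add]
        rw [nu_40, smul_smul, ← add_smul]
        convert zero_smul ℂ _ using 2
        ring
      · rw [nu_zero _ a b (i + 4) j (by omega), nu_zero _ a b (i + 2) (j + 3) (by omega)]
        simp
    · have : M a b i j * (-5 * X 3 ^ 4 + 3 * C t * X 2 ^ 3 * X 3 ^ 2)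
          = (-5 : ℂ) • M a b i (j + 4) + (3 * t) • M a b (i + 3) (j + 2) := by
        simp only [M, smul_eq_C_mul, map_ofNat, map_mul, map_neg]; ring
      rw [this]
      simp only [map_add, map_smul, phi_M]
      by_cases h : a = 0 ∧ b = 0 ∧ i = 0 ∧ j = 0
      · obtain ⟨rfl, rfl, rfl, rfl⟩ := h
        simp only [zero_add]
        rw [nu_04, smul_smul, ← add_smul]
        convert zero_smul ℂ _ using 2
        ring
      · rw [nu_zero _ a b i (j + 4) (by omega), nu_zero _ a b (i + 3) (j + 2) (by omega)]
        simp

lemma mem_f (t : ℂ) : cA4Def t ∈ tjurinaIdeal (cA4Def t) := Ideal.subset_span (by simp)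

lemma mem_d (t : ℂ) (i : Fin 4) : pderiv i (cA4Def t) ∈ tjurinaIdeal (cA4Def t) :=
  Ideal.subset_span (by fin_cases i <;> simp)

lemma mem_x0 (t : ℂ) : X 0 ∈ tjurinaIdeal (cA4Def t) := by
  have h := Ideal.mul_mem_left _ (C (1 / 2)) (mem_d t 0)
  rw [pd0] at h
  convert h using 1
  rw [← map_ofNat C 2, ← mul_assoc, ← map_mul]; norm_num

lemma mem_x1 (t : ℂ) : X 1 ∈ tjurinaIdeal (cA4Def t) := by
  have h := Ideal.mul_mem_left _ (C (1 / 2)) (mem_d t 1)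
  rw [pd1] at h
  convert h using 1
  rw [← map_ofNat C 2, ← mul_assoc, ← map_mul]; norm_num

lemma mem_g2 (t : ℂ) : X 2 ^ 4 + C (3 * t / 5) * (X 2 ^ 2 * X 3 ^ 3) ∈ tjurinaIdeal (cA4Def t) := by
  have h := Ideal.mul_mem_left _ (C (1 / 5)) (mem_d t 2)
  rw [pd2] at h
  convert h using 1
  have e1 : (C (1 / 5) : MvPolynomial (Fin 4) ℂ) * 5 = 1 := by
    rw [← map_ofNat C 5, ← map_mul]; norm_num
  have e2 : (C (3 * t / 5) : MvPolynomial (Fin 4) ℂ) = C (1 / 5) * 3 * C t := by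
    rw [← map_ofNat C 3, ← map_mul, ← map_mul]; congr 1; ring
  rw [e2]
  linear_combination (- X 2 ^ 4) * e1

lemma mem_g3 (t : ℂ) : X 3 ^ 4 - C (3 * t / 5) * (X 2 ^ 3 * X 3 ^ 2) ∈ tjurinaIdeal (cA4Def t) := by
  have h := Ideal.mul_mem_left _ (-C (1 / 5)) (mem_d t 3)
  rw [pd3] at h
  convert h using 1
  have e1 : (C (1 / 5) : MvPolynomial (Fin 4) ℂ) * 5 = 1 := by
    rw [← map_ofNat C 5, ← map_mul]; norm_num
  have e2 : (C (3 * t / 5) : MvPolynomial (Fin 4) ℂ) = C (1 / 5) * 3 * C t := by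
    rw [← map_ofNat C 3, ← map_mul, ← map_mul]; congr 1; ring
  rw [e2]
  linear_combination (- X 3 ^ 4) * e1

lemma mem_33 (t : ℂ) (ht : t ≠ 0) : X 2 ^ 3 * X 3 ^ 3 ∈ tjurinaIdeal (cA4Def t) := by
  have h : C t * (X 2 ^ 3 * X 3 ^ 3) ∈ tjurinaIdeal (cA4Def t) := by
    have h0 := Ideal.mul_mem_left _ 5 (mem_f t)
    have h1 := Ideal.mul_mem_left _ (5 * X 0) (mem_x0 t)
    have h2 := Ideal.mul_mem_left _ (5 * X 1) (mem_x1 t)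
    have h3 := Ideal.mul_mem_left _ (X 2) (mem_d t 2)
    have h4 := Ideal.mul_mem_left _ (X 3) (mem_d t 3)
    have := sub_mem (add_mem (add_mem (add_mem h1 h2) h3) h4) h0
    rw [pd2, pd3, cA4Def] at this
    rw [cA4Def]
    convert this using 1
    ring
  have h' := Ideal.mul_mem_left _ (C t⁻¹) h
  rwa [← mul_assoc, ← map_mul, inv_mul_cancel₀ ht, map_one, one_mul] at h'

lemma mem_50 (t : ℂ) (ht : t ≠ 0) : X 2 ^ 5 ∈ tjurinaIdeal (cA4Def t) := by
  have := sub_mem (Ideal.mul_mem_left _ (X 2) (mem_g2 t))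
    (Ideal.mul_mem_left _ (C (3 * t / 5)) (mem_33 t ht))
  convert this using 1
  ring

lemma mem_05 (t : ℂ) (ht : t ≠ 0) : X 3 ^ 5 ∈ tjurinaIdeal (cA4Def t) := by
  have := add_mem (Ideal.mul_mem_left _ (X 3) (mem_g3 t))
    (Ideal.mul_mem_left _ (C (3 * t / 5)) (mem_33 t ht))
  convert this using 1
  ring

lemma mem_41 (t : ℂ) (ht : t ≠ 0) : X 2 ^ 4 * X 3 ∈ tjurinaIdeal (cA4Def t) := by
  have := sub_mem (sub_mem (Ideal.mul_mem_left _ (X 3) (mem_g2 t))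
    (Ideal.mul_mem_left _ (C (3 * t / 5) * X 2 ^ 2) (mem_g3 t)))
    (Ideal.mul_mem_left _ (C (3 * t / 5) ^ 2 * X 3 ^ 2) (mem_50 t ht))
  convert this using 1
  ring

lemma mem_14 (t : ℂ) (ht : t ≠ 0) : X 2 * X 3 ^ 4 ∈ tjurinaIdeal (cA4Def t) := by
  have := add_mem (Ideal.mul_mem_left _ (X 2) (mem_g3 t))
    (Ideal.mul_mem_left _ (C (3 * t / 5) * X 3) (mem_41 t ht))
  convert this using 1
  ring

lemma mem_M (t : ℂ) (ht : t ≠ 0) (a b i j : ℕ) (h : 0 < a ∨ 0 < b ∨ 5 ≤ i ∨ 5 ≤ j ∨ (4 ≤ i ∧ 1 ≤ j) ∨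
    (1 ≤ i ∧ 4 ≤ j) ∨ (3 ≤ i ∧ 3 ≤ j)) : M a b i j ∈ tjurinaIdeal (cA4Def t) := by
  have key : ∀ a' b' i' j', a' ≤ a → b' ≤ b → i' ≤ i → j' ≤ j →
      M a' b' i' j' ∈ tjurinaIdeal (cA4Def t) → M a b i j ∈ tjurinaIdeal (cA4Def t) := by
    intro a' b' i' j' h1 h2 h3 h4 hm
    refine Ideal.mem_of_dvd _ ?_ hm
    unfold M
    gcongr
  rcases h with h | h | h | h | ⟨h, h'⟩ | ⟨h, h'⟩ | ⟨h, h'⟩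
  · exact key 1 0 0 0 h (by omega) (by omega) (by omega) (by simpa [M] using mem_x0 t)
  · exact key 0 1 0 0 (by omega) h (by omega) (by omega) (by simpa [M] using mem_x1 t)
  · exact key 0 0 5 0 (by omega) (by omega) h (by omega) (by simpa [M] using mem_50 t ht)
  · exact key 0 0 0 5 (by omega) (by omega) (by omega) h (by simpa [M] using mem_05 t ht)
  · exact key 0 0 4 1 (by omega) (by omega) h h' (by simpa only [M, pow_zero, one_mul, pow_one] using mem_41 t ht)
  · exact key 0 0 1 4 (by omega) (by omega) h h' (by simpa only [M, pow_zero, one_mul, pow_one] using mem_14 t ht)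
  · exact key 0 0 3 3 (by omega) (by omega) h h' (by simpa only [M, pow_zero, one_mul, pow_one] using mem_33 t ht)

lemma sub_sig_M (t : ℂ) (ht : t ≠ 0) (a b i j : ℕ) :
    M a b i j - sig (nu (3 * t / 5) a b i j) ∈ tjurinaIdeal (cA4Def t) := by
  by_cases h : 0 < a ∨ 0 < b ∨ 5 ≤ i ∨ 5 ≤ j ∨ (4 ≤ i ∧ 1 ≤ j) ∨
    (1 ≤ i ∧ 4 ≤ j) ∨ (3 ≤ i ∧ 3 ≤ j)
  · rw [nu_zero _ _ _ _ _ h, map_zero, sub_zero]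
    exact mem_M t ht _ _ _ _ h
  · obtain rfl : a = 0 := by omega
    obtain rfl : b = 0 := by omega
    have key : ∀ k : K, sig (nu (3 * t / 5) 0 0 k.1.1 k.1.2) = M 0 0 k.1.1 k.1.2 := by
      intro k; rw [nu_single, sig_single]
    by_cases h1 : i = 4
    · obtain rfl : j = 0 := by omega
      subst h1
      have e : sig (nu (3 * t / 5) 0 0 2 3) = M 0 0 2 3 := key ⟨(2, 3), by decide⟩
      rw [nu_40, map_smul, e]
      convert mem_g2 t using 1
      simp only [M, smul_eq_C_mul, map_neg]; ring
    by_cases h2 : j = 4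
    · obtain rfl : i = 0 := by omega
      subst h2
      have e : sig (nu (3 * t / 5) 0 0 3 2) = M 0 0 3 2 := key ⟨(3, 2), by decide⟩
      rw [nu_04, map_smul, e]
      convert mem_g3 t using 1
      simp only [M, smul_eq_C_mul]; ring
    have e : sig (nu (3 * t / 5) 0 0 i j) = M 0 0 i j :=
      key ⟨(⟨i, by omega⟩, ⟨j, by omega⟩), by
        intro hh
        simp only [Prod.mk.injEq, Fin.ext_iff] at hh
        have h3 : i = 3 := hh.1
        have h4 : j = 3 := hh.2
        omega⟩
    rw [e, sub_self]
    exact zero_mem _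

lemma sub_sig (t : ℂ) (ht : t ≠ 0) (p : MvPolynomial (Fin 4) ℂ) :
    p - sig (phi (3 * t / 5) p) ∈ tjurinaIdeal (cA4Def t) := by
  have := mem_of_M (((tjurinaIdeal (cA4Def t)).restrictScalars ℂ).comap
    (LinearMap.id - sig.comp (phi (3 * t / 5)))) (by
      intro a b i j
      simpa [phi_M] using sub_sig_M t ht a b i j) p
  simpa using this

end CA4

open CA4
theorem statement12 (t : ℂ) (ht : t ≠ 0) :
    FiniteDimensional ℂ (MvPolynomial (Fin 4) ℂ ⧸ tjurinaIdeal (cA4Def t)) ∧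
    Module.finrank ℂ (MvPolynomial (Fin 4) ℂ ⧸ tjurinaIdeal (cA4Def t)) = 15 := by
  let F : (K → ℂ) →ₗ[ℂ] (MvPolynomial (Fin 4) ℂ ⧸ tjurinaIdeal (cA4Def t)) :=
    (Ideal.Quotient.mkₐ ℂ (tjurinaIdeal (cA4Def t))).toLinearMap.comp sig
  have hF : ∀ v, F v = Ideal.Quotient.mk (tjurinaIdeal (cA4Def t)) (sig v) := fun _ => rfl
  have hinj : Function.Injective F := by
    rw [← LinearMap.ker_eq_bot, LinearMap.ker_eq_bot']
    intro v hv
    rw [hF, Ideal.Quotient.eq_zero_iff_mem] at hv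
    have := phi_ideal t _ hv 1
    rwa [one_mul, phi_sig] at this
  have hsurj : Function.Surjective F := by
    intro q
    obtain ⟨p, rfl⟩ := Ideal.Quotient.mk_surjective q
    refine ⟨phi (3 * t / 5) p, ?_⟩
    rw [hF]
    exact (Ideal.Quotient.eq.mpr (sub_sig t ht p)).symm
  let e := LinearEquiv.ofBijective F ⟨hinj, hsurj⟩
  refine ⟨Module.Finite.equiv e, ?_⟩
  rw [← e.finrank_eq, Module.finrank_fintype_fun_eq_card]
  rfl
end
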